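/- Let u ∈ C([0,1] : H¹(ℝⁿ)) be a (sufficiently regular) solution of ∂ₜu = i(Δu + V(x,t)u) on ℝⁿ × (0,1), where V ∈ L^∞(ℝⁿ × [0,1]) with ‖V‖_∞ ≤ L, and suppose u₀ = u(·,0) is not identically zero, so that for some R₀ > 0 one has ∫_{B_{R₀}}|u₀|² dx = c₀² > 0; set A² = sup_{0≤t≤1} ∫_{ℝⁿ}(|u(x,t)|² + |∇u(x,t)|²) dx and t* = min(256A/(c₀L), 2⁻¹⁴(c₀/A)⁴, R₀², 1/L²). Let c_n be the dimensional constant from the one-time lower bound theorem. If there exists t₀ with 0 < t₀ < t* such that lim_{ρ→∞} (1/t₀) e^{c_n ρ²/t₀} ∫_{t₀/4}^{3t₀} ∫_{{y : | |y| − ρ(1 + s/t₀)| < 4ρ√{t₀}}} ( |u(y,s)|² + s|∇u(y,s)|² ) dy ds = 0, then u ≡ 0. -/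

import Mathlib

/-!
The hypotheses are contradictory: the initial mass `c₀² > 0` in `B_{R₀}` forces the weighted
integral to stay at least `c₀²` for all large `ρ`, while it is assumed to tend to `0`.

The lower bound is a statement on a ball `B_M`, in terms of the local bound
`A_M² = sup_t ∫_{B_M} (|u|² + |∇u|²)`, and is used with `M = ρ`. Its time threshold contains
`256 A_M / (c₀ L)`, which is smaller than the global `256 A / (c₀ L)`. Since `A_M ↑ A` as
`M → ∞` and `t₀` lies strictly below the global threshold, `t₀` is admissible for all large `M`;
the other term depending on `A_M`, namely `2⁻¹⁴ (c₀ / A_M)⁴`, only improves because `A_M ≤ A`.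
-/

open MeasureTheory Real Set

noncomputable section

/-- `ℝⁿ` as a Euclidean space. -/
abbrev Euc (n : ℕ) := EuclideanSpace ℝ (Fin n)

/-- The spatial Laplacian `Δf = ∑ⱼ ∂²f/∂xⱼ²`. -/
def lapl {n : ℕ} (f : Euc n → ℂ) (x : Euc n) : ℂ :=
  ∑ i : Fin n,
    fderiv ℝ (fun y => fderiv ℝ f y (EuclideanSpace.single i (1 : ℝ))) x
      (EuclideanSpace.single i (1 : ℝ))

/-- The squared norm of the spatial gradient, `|∇f|² = ∑ⱼ |∂ⱼf|²`. -/
def gradSq {n : ℕ} (f : Euc n → ℂ) (x : Euc n) : ℝ :=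
  ∑ i : Fin n, ‖fderiv ℝ f x (EuclideanSpace.single i (1 : ℝ))‖ ^ 2

/-- `c` is a dimensional constant as in the one-time lower bound theorem
(Theorem 1 of the paper). -/
def IsLowerBoundConstant (n : ℕ) (c : ℝ) : Prop :=
  0 < c ∧
    ∀ (u V : Euc n → ℝ → ℂ) (L R₀ c₀ M A : ℝ),
      (∀ t ∈ Icc (0:ℝ) 1, ContDiff ℝ 2 (fun x => u x t)) →
      (∀ x : Euc n, ContDiff ℝ 1 (fun t => u x t)) →
      (∀ (x : Euc n), ∀ t ∈ Icc (0:ℝ) 1,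
        deriv (fun τ => u x τ) t
          = Complex.I * (lapl (fun y => u y t) x + V x t * u x t)) →
      Measurable (fun p : Euc n × ℝ => V p.1 p.2) →
      (∀ (x : Euc n), ∀ t ∈ Icc (0:ℝ) 1, ‖V x t‖ ≤ L) →
      0 < R₀ → 0 < c₀ →
      (∫ x in Metric.ball (0 : Euc n) R₀, ‖u x 0‖ ^ 2) = c₀ ^ 2 →
      4 * R₀ + 1 ≤ M → 0 ≤ A →
      (∀ t ∈ Icc (0:ℝ) 1,
        IntegrableOn (fun x => ‖u x t‖ ^ 2 + gradSq (fun y => u y t) x)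
          (Metric.ball (0 : Euc n) M)) →
      sSup ((fun t => ∫ x in Metric.ball (0 : Euc n) M,
          (‖u x t‖ ^ 2 + gradSq (fun y => u y t) x)) '' Icc (0:ℝ) 1) = A ^ 2 →
      ∀ t : ℝ, 0 < t →
        t < min (min (256 * A / (c₀ * L)) ((2:ℝ) ^ (-14 : ℤ) * (c₀ / A) ^ 4))
            (min (R₀ ^ 2) (1 / L ^ 2)) →
        ∀ ρ : ℝ, R₀ ≤ ρ → ρ ≤ M →
          c₀ ^ 2 ≤ Real.exp (c * ρ ^ 2 / t) / t *
            ∫ s in Icc (t/4) (3*t),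
              ∫ y in {y : Euc n | |‖y‖ - ρ - ρ * s / t| < 4 * ρ * Real.sqrt t},
                (‖u y s‖ ^ 2 + s * gradSq (fun z => u z s) y)

/-- Theorem 3 of the paper: uniqueness letting the spatial parameter `ρ` tend to
infinity at a single fixed time `t₀ < t*`.  If `u ∈ C([0,1]:H¹(ℝⁿ))` solves
`∂ₜu = i(Δu + Vu)` with `‖V‖_∞ ≤ L`, has initial mass `c₀² > 0` in `B_{R₀}`, global
`H¹`-bound `A`, and for some `0 < t₀ < t* = min(256A/(c₀L), 2⁻¹⁴(c₀/A)⁴, R₀², 1/L²)`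
the quantity `(1/t₀)e^{cρ²/t₀}∫_{t₀/4}^{3t₀}∫_{||y|-ρ(1+s/t₀)|<4ρ√t₀}(|u|²+s|∇u|²)`
tends to `0` as `ρ → ∞`, then `u ≡ 0`. -/
theorem uniqueness_from_spatial_decay (n : ℕ) (c : ℝ)
    (hc : IsLowerBoundConstant n c)
    (u V : Euc n → ℝ → ℂ) (L R₀ c₀ A t₀ : ℝ)
    (hu2 : ∀ t ∈ Icc (0:ℝ) 1, ContDiff ℝ 2 (fun x => u x t))
    (hu1 : ∀ x : Euc n, ContDiff ℝ 1 (fun t => u x t))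
    (heq : ∀ (x : Euc n), ∀ t ∈ Icc (0:ℝ) 1,
      deriv (fun τ => u x τ) t
        = Complex.I * (lapl (fun y => u y t) x + V x t * u x t))
    (hVmeas : Measurable (fun p : Euc n × ℝ => V p.1 p.2))
    (hV : ∀ (x : Euc n), ∀ t ∈ Icc (0:ℝ) 1, ‖V x t‖ ≤ L)
    (hR₀ : 0 < R₀) (hc₀ : 0 < c₀)
    (hmass : (∫ x in Metric.ball (0 : Euc n) R₀, ‖u x 0‖ ^ 2) = c₀ ^ 2)
    (hA : 0 ≤ A)
    (hH1 : ∀ t ∈ Icc (0:ℝ) 1,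
      Integrable (fun x => ‖u x t‖ ^ 2 + gradSq (fun y => u y t) x))
    (hsup : sSup ((fun t => ∫ x : Euc n,
        (‖u x t‖ ^ 2 + gradSq (fun y => u y t) x)) '' Icc (0:ℝ) 1) = A ^ 2)
    (ht₀ : 0 < t₀)
    (ht₀' : t₀ < min (min (256 * A / (c₀ * L)) ((2:ℝ) ^ (-14 : ℤ) * (c₀ / A) ^ 4))
        (min (R₀ ^ 2) (1 / L ^ 2)))
    (hlim : Filter.Tendsto (fun ρ : ℝ =>
        (1 / t₀) * Real.exp (c * ρ ^ 2 / t₀) *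
          ∫ s in Icc (t₀/4) (3*t₀),
            ∫ y in {y : Euc n | |‖y‖ - ρ * (1 + s / t₀)| < 4 * ρ * Real.sqrt t₀},
              (‖u y s‖ ^ 2 + s * gradSq (fun z => u z s) y))
      Filter.atTop (nhds 0)) :
    ∀ (x : Euc n), ∀ t ∈ Icc (0:ℝ) 1, u x t = 0 := by
  exfalso
  have hint0 : ∀ t (x : Euc n), 0 ≤ ‖u x t‖ ^ 2 + gradSq (fun y => u y t) x := fun t x =>
    add_nonneg (sq_nonneg _) (Finset.sum_nonneg fun i _ => sq_nonneg _)
  obtain ⟨h12, h34⟩ := lt_min_iff.1 ht₀'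
  obtain ⟨h1, h2⟩ := lt_min_iff.1 h12
  obtain ⟨h3, h4⟩ := lt_min_iff.1 h34
  have hL : 0 < L := by
    have hL0 : 0 ≤ L := (norm_nonneg _).trans (hV 0 0 (by simp))
    -- for `L = 0` the bound `t₀ < 1 / L ^ 2` reads `t₀ < 0`
    refine lt_of_le_of_ne hL0 fun h => ?_
    rw [← h] at h4
    norm_num at h4
    linarith
  have hApos : 0 < A := by
    refine lt_of_le_of_ne hA fun h => ?_
    rw [← h] at h1
    norm_num at h1
    linarith
  set G : ℝ → ℝ := fun t => ∫ x : Euc n, (‖u x t‖ ^ 2 + gradSq (fun y => u y t) x) with hG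
  set g : ℝ → ℝ → ℝ := fun M t => ∫ x in Metric.ball (0 : Euc n) M,
    (‖u x t‖ ^ 2 + gradSq (fun y => u y t) x) with hg
  -- An unbounded set of reals has supremum `0` in Lean, which `A > 0` excludes.
  have hbdd : BddAbove (G '' Icc (0:ℝ) 1) := by
    by_contra h
    rw [Real.sSup_of_not_bddAbove h] at hsup
    have : 0 < A ^ 2 := by positivity
    linarith
  have hgG : ∀ M, ∀ t ∈ Icc (0:ℝ) 1, g M t ≤ G t := fun M t ht =>
    setIntegral_le_integral (hH1 t ht) (Filter.Eventually.of_forall (hint0 t))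
  have hgA : ∀ M, ∀ t ∈ Icc (0:ℝ) 1, g M t ≤ A ^ 2 := fun M t ht =>
    (hgG M t ht).trans (hsup ▸ le_csSup hbdd (mem_image_of_mem G ht))
  have hgbdd : ∀ M, BddAbove (g M '' Icc (0:ℝ) 1) := fun M =>
    ⟨A ^ 2, by rintro _ ⟨t, ht, rfl⟩; exact hgA M t ht⟩
  -- `t₀ < 256 * B / (c₀ * L)` holds exactly for `B > K`, and `K < A`.
  set K : ℝ := t₀ * (c₀ * L) / 256 with hK
  have hK0 : 0 < K := by positivity
  have hKA : K < A := by
    rw [lt_div_iff₀ (by positivity)] at h1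
    rw [hK]; linarith
  obtain ⟨_, ⟨t₁, ht₁, rfl⟩, hKt⟩ : ∃ b ∈ G '' Icc (0:ℝ) 1, K ^ 2 < b := by
    refine exists_lt_of_lt_csSup ⟨_, mem_image_of_mem G (left_mem_Icc.2 zero_le_one)⟩ ?_
    rw [hsup]
    exact pow_lt_pow_left₀ hKA hK0.le two_ne_zero
  have htend : Filter.Tendsto (fun M => g M t₁) Filter.atTop (nhds (G t₁)) :=
    (aecover_ball (μ := volume) (x := (0 : Euc n))
      Filter.tendsto_id).integral_tendsto_of_countably_generated (hH1 t₁ ht₁)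
  have hlow : ∀ᶠ ρ : ℝ in Filter.atTop, c₀ ^ 2 ≤ (1 / t₀) * Real.exp (c * ρ ^ 2 / t₀) *
          ∫ s in Icc (t₀/4) (3*t₀),
            ∫ y in {y : Euc n | |‖y‖ - ρ * (1 + s / t₀)| < 4 * ρ * Real.sqrt t₀},
              (‖u y s‖ ^ 2 + s * gradSq (fun z => u z s) y) := by
    filter_upwards [htend.eventually_const_lt hKt, Filter.eventually_ge_atTop (4 * R₀ + 1)]
      with ρ hρ1 hρ2
    -- The lower bound is applied on the ball of radius `M = ρ`, with the local bound `B`.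
    set S : ℝ := sSup (g ρ '' Icc (0:ℝ) 1) with hS
    have hKS : K ^ 2 < S := hρ1.trans_le (le_csSup (hgbdd ρ) (mem_image_of_mem _ ht₁))
    have hSA : S ≤ A ^ 2 :=
      csSup_le ⟨_, mem_image_of_mem _ ht₁⟩ (by rintro _ ⟨t, ht, rfl⟩; exact hgA ρ t ht)
    have hKB : K < √S := Real.lt_sqrt_of_sq_lt hKS
    have hBA : √S ≤ A := Real.sqrt_le_iff.2 ⟨hA, hSA⟩
    have hB0 : 0 < √S := hK0.trans hKB
    have hSB : S = √S ^ 2 := (Real.sq_sqrt ((sq_nonneg K).trans hKS.le)).symm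
    have key := hc.2 u V L R₀ c₀ ρ (√S) hu2 hu1 heq hVmeas hV hR₀ hc₀ hmass hρ2 hB0.le
      (fun t ht => (hH1 t ht).integrableOn) hSB t₀ ht₀
      (lt_min (lt_min ?_ (h2.trans_le ?_)) h34) ρ (by linarith) le_rfl
    · rw [one_div_mul_eq_div]
      have hset : ∀ s, ∀ y : Euc n, ‖y‖ - ρ * (1 + s / t₀) = ‖y‖ - ρ - ρ * s / t₀ :=
        fun s y => by ring
      simpa only [hset] using key
    · rw [lt_div_iff₀ (by positivity)]
      rw [hK] at hKB; linarith
    · gcongr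
  have : c₀ ^ 2 ≤ 0 := ge_of_tendsto hlim hlow
  have : 0 < c₀ ^ 2 := by positivity
  linarith
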